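/- arXiv:2512.12942 — 4 statements merged into one kernel-verified Lean document; each statement's English description precedes it below -/
import Mathlib

section
/- Let A and B be nonempty finite subsets of an abelian group G with |A| = |B| and 1 ∉ B. Then there exists a bijection f : A → B with a·f(a) ∉ A for all a ∈ A if and only if for every pair of nonempty subsets S ⊆ A and R ⊆ B ∪ {1} with SR = S, we have |S| ≤ |B \ R|. -/
/-!
The forward direction is a pigeonhole argument: if `S * R = S ⊆ A`, then a matching `f` cannot send an
element of `S` into `R`, so it injects `S` into `B \ R`.

For the converse, a failure of Hall's condition at `S ⊆ A` says that `R`, consisting of `1` and the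
`b ∈ B` with `S * {b} ⊆ A`, satisfies `S * R ⊆ A` and `|A| + 2 ≤ |S| + |R|`. Among pairs with these
properties, the Dyson transform `(S, R) ↦ (S ∪ sR, R ∩ s⁻¹S)` at `s ∈ S` keeps `|S| + |R|`, does not
enlarge `S * R`, and strictly enlarges `S` as soon as `sR ⊄ S`. Iterating it therefore ends
(`exists_mul_eq_self`) at a pair with `S * R = S`, which violates the condition of the theorem.
-/

open Pointwise

/-- Iterated Dyson transforms turn a pair `(S, R)` with `1 ∈ R` and `S * R ⊆ A` into a pair
`(S', R')` with `S' * R' = S'`, `R' ⊆ R` and the same total size. The induction is on a bound `n` for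
`|A| - |S|`, which each transform decreases. -/
theorem exists_mul_eq_self {G : Type*} [CommGroup G] [DecidableEq G] (A : Finset G) (n : ℕ) :
    ∀ S R : Finset G, A.card - S.card ≤ n → S.Nonempty → 1 ∈ R → S * R ⊆ A →
      ∃ S' R' : Finset G, S'.Nonempty ∧ 1 ∈ R' ∧ R' ⊆ R ∧ S' ⊆ A ∧ S' * R' = S' ∧
        S'.card + R'.card = S.card + R.card := by
  induction n with
  | zero =>
    intro S R hn hS h1 hSR
    have hsub : S ⊆ S * R := Finset.subset_mul_left S h1
    have hSA : S = A := Finset.eq_of_subset_of_card_le (hsub.trans hSR) (by omega)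
    exact ⟨S, R, hS, h1, subset_rfl, hsub.trans hSR,
      (Finset.Subset.antisymm (hSR.trans hSA.ge) hsub), rfl⟩
  | succ n ih =>
    intro S R hn hS h1 hSR
    have hsub : S ⊆ S * R := Finset.subset_mul_left S h1
    by_cases hst : S * R ⊆ S
    · exact ⟨S, R, hS, h1, subset_rfl, hsub.trans hSR, Finset.Subset.antisymm hst hsub, rfl⟩
    obtain ⟨x, hx, hxS⟩ := Finset.not_subset.1 hst
    obtain ⟨s, hs, r, hr, rfl⟩ := Finset.mem_mul.1 hx
    have hT : S ∪ s • R ⊆ S * R := by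
      refine Finset.union_subset hsub ?_
      intro y hy
      obtain ⟨t, ht, rfl⟩ := Finset.mem_smul_finset.1 hy
      exact Finset.mul_mem_mul hs ht
    have hlt : S.card < (S ∪ s • R).card := by
      refine Finset.card_lt_card ⟨Finset.subset_union_left, fun h => hxS (h ?_)⟩
      exact Finset.mem_union_right _ (Finset.smul_mem_smul_finset hr)
    have hle := Finset.card_le_card (hT.trans hSR)
    have hcard : (S ∪ s • R).card + (R ∩ s⁻¹ • S).card = S.card + R.card := by
      have h2 : (R ∩ s⁻¹ • S).card = (S ∩ s • R).card := by
        rw [← Finset.card_smul_finset s (R ∩ s⁻¹ • S), Finset.smul_finset_inter,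
          smul_inv_smul, Finset.inter_comm]
      rw [h2, Finset.card_union_add_card_inter, Finset.card_smul_finset]
    obtain ⟨S', R', a, b, c, d, e, f⟩ := ih (S ∪ s • R) (R ∩ s⁻¹ • S) (by omega)
      (hS.mono Finset.subset_union_left)
      (Finset.mem_inter.2 ⟨h1, Finset.mem_smul_finset.2 ⟨s, hs, by simp⟩⟩)
      (by
        intro y hy
        obtain ⟨u, hu, v, hv, rfl⟩ := Finset.mem_mul.1 hy
        obtain ⟨hvR, hvS⟩ := Finset.mem_inter.1 hv
        rcases Finset.mem_union.1 hu with hu | hu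
        · exact hSR (Finset.mul_mem_mul hu hvR)
        · obtain ⟨t, ht, rfl⟩ := Finset.mem_smul_finset.1 hu
          obtain ⟨w, hw, rfl⟩ := Finset.mem_smul_finset.1 hvS
          have : s • t * s⁻¹ • w = w * t := by
            simp only [smul_eq_mul]
            rw [mul_mul_mul_comm, mul_inv_cancel, one_mul, mul_comm]
          rw [this]
          exact hSR (Finset.mul_mem_mul hw ht))
    exact ⟨S', R', a, b, c.trans Finset.inter_subset_left, d, e, f.trans hcard⟩

theorem stmt_1 {G : Type*} [CommGroup G] [DecidableEq G]
    (A B : Finset G) (hA : A.Nonempty) (hB : B.Nonempty)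
    (hcard : A.card = B.card) (h1 : (1 : G) ∉ B) :
    (∃ f : G → G, Set.BijOn f (A : Set G) (B : Set G) ∧ ∀ a ∈ A, a * f a ∉ A) ↔
    ∀ S R : Finset G, S.Nonempty → R.Nonempty → S ⊆ A → R ⊆ B ∪ {1} →
      S * R = S → S.card ≤ (B \ R).card := by
  constructor
  · rintro ⟨f, hf, hfA⟩ S R _ _ hSA _ hSR
    refine Finset.card_le_card_of_injOn f ?_ (hf.injOn.mono (by exact_mod_cast hSA))
    intro s hs
    have hs : s ∈ S := hs
    have hfB : f s ∈ B := hf.mapsTo (hSA hs)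
    refine Finset.mem_coe.2 (Finset.mem_sdiff.2 ⟨hfB, fun hR => hfA s (hSA hs) (hSA ?_)⟩)
    rw [← hSR]
    exact Finset.mul_mem_mul hs hR
  · intro h
    let t : A → Finset G := fun a => B.filter fun b => (a : G) * b ∉ A
    have hall : ∀ T : Finset A, T.card ≤ (T.biUnion t).card := by
      intro T
      by_contra! hT
      let S : Finset G := T.map (Function.Embedding.subtype _)
      have hScard : S.card = T.card := Finset.card_map _
      have hTne : T.Nonempty := Finset.card_pos.1 (by omega)
      have hNB : T.biUnion t ⊆ B := Finset.biUnion_subset.2 fun a _ => Finset.filter_subset _ _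
      let R : Finset G := insert 1 (B \ T.biUnion t)
      have hRcard : R.card = (B.card - (T.biUnion t).card) + 1 := by
        rw [Finset.card_insert_of_notMem (fun hh => h1 (Finset.mem_sdiff.1 hh).1),
          Finset.card_sdiff_of_subset hNB]
      have hNle := Finset.card_le_card hNB
      have hSR : S * R ⊆ A := by
        intro y hy
        obtain ⟨s, hs, r, hr, rfl⟩ := Finset.mem_mul.1 hy
        obtain ⟨a, ha, rfl⟩ := Finset.mem_map.1 hs
        rcases Finset.mem_insert.1 hr with rfl | hr
        · simp
        · obtain ⟨hrB, hrN⟩ := Finset.mem_sdiff.1 hr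
          by_contra hc
          exact hrN (Finset.mem_biUnion.2 ⟨a, ha, Finset.mem_filter.2 ⟨hrB, hc⟩⟩)
      obtain ⟨S', R', hS', h1R, hR'R, hS'A, hst, hsum⟩ :=
        exists_mul_eq_self A _ S R le_rfl (hTne.map) (Finset.mem_insert_self _ _) hSR
      have hR'B : R' ⊆ insert 1 B :=
        hR'R.trans (Finset.insert_subset_insert _ Finset.sdiff_subset)
      have key := h S' R' hS' ⟨1, h1R⟩ hS'A
        (by rw [Finset.union_comm]; exact hR'B) hst
      -- As `1 ∈ R'`, removing `R'` from `B` or from `B ∪ {1}` leaves the same set.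
      have hd : B \ R' = insert 1 B \ R' := (Finset.insert_sdiff_of_mem B h1R).symm
      rw [hd, Finset.card_sdiff_of_subset hR'B, Finset.card_insert_of_notMem h1] at key
      have := Finset.card_pos.2 hS'
      omega
    obtain ⟨g, hg, hgt⟩ := (Finset.all_card_le_biUnion_card_iff_exists_injective t).1 hall
    let f : G → G := fun a => if ha : a ∈ A then g ⟨a, ha⟩ else 1
    have hfg : ∀ a (ha : a ∈ A), f a = g ⟨a, ha⟩ := fun a ha => dif_pos ha
    have hmem : ∀ a ∈ A, f a ∈ B ∧ a * f a ∉ A := by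
      intro a ha
      rw [hfg a ha]
      exact Finset.mem_filter.1 (hgt ⟨a, ha⟩)
    have hmaps : Set.MapsTo f (A : Set G) (B : Set G) := fun a ha => (hmem a ha).1
    have hinj : Set.InjOn f (A : Set G) := by
      intro a ha b hb hab
      rw [hfg a ha, hfg b hb] at hab
      exact congrArg Subtype.val (hg hab)
    exact ⟨f, ⟨hmaps, hinj, Finset.surjOn_of_injOn_of_card_le f hmaps hinj hcard.ge⟩,
      fun a ha => (hmem a ha).2⟩
end

section
/- Let K ⊊ L be a field extension and let A and B be n-dimensional K-subspaces of L with n > 0. If the pair (A,B) is unmatchable, then there exists a nonzero K-subspace R ⊆ B and direct-sum decompositions A = S ⊕ Y and B = R ⊕ Z, where for every x ∈ R the subspace S equals the sum over a ∈ S of the subspaces a·K(x) (i.e., S is a vector space over K(x) for each x ∈ R), and dim_K Y < dim_K R. Conversely, any such decomposition implies (A,B) is unmatchable. -/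
/-!
Suppose a basis `a` of `A` is matched to no basis of `B`, and put `U i = {b ∈ B : a i * b ∈ A}`.
A basis `b` matched to `a` is the same as a basis dual to independent functionals `φ i` vanishing
on `U i`. By Rado's theorem for the annihilators of the `U i` (`exists_basis_avoiding`), its
absence yields `J` with `#J + dim (⋂ i ∈ J, U i) > n`. So `V = span {a i : i ∈ J}` and
`U = ⋂ i ∈ J, U i` satisfy `V * U ⊆ A` and `dim V + dim U > n`. A linear version of Dyson's
transform (`exists_stable_pair`) turns `(V, U)` into a pair `(S, R)` with `S ⊆ A`, `R ⊆ B`,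
`S * R ⊆ S` and `dim S + dim R > n`. Both are then nonzero, and since `S` is finite-dimensional
each `x ∈ R` is algebraic, whence `S` is stable under `K(x) = K[x]`.

Conversely, extend a basis of `S` by a basis of `Y` to a basis `a` of `A`. Since `S * R ⊆ A`, a
basis `b` of `B` matched to `a` would satisfy `R ⊆ span {b j : j ≠ i}` for every `i` with
`a i ∈ S`, so `R` would lie in the span of the remaining `dim Y < dim R` vectors.
-/

open Pointwise

/-- `a : Fin n → L` is an ordered basis of the `K`-subspace `A` of `L`. -/
def IsBasisOf {K L : Type*} [Field K] [Field L] [Algebra K L]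
    (A : Submodule K L) {n : ℕ} (a : Fin n → L) : Prop :=
  LinearIndependent K a ∧ Submodule.span K (Set.range a) = A

/-- `A` is matched to `B` (both of dimension `n`): every ordered basis of `A`
can be matched to some ordered basis of `B`. -/
def MatchedTo {K L : Type*} [Field K] [Field L] [Algebra K L]
    (A B : Submodule K L) (n : ℕ) : Prop :=
  ∀ a : Fin n → L, IsBasisOf A a →
    ∃ b : Fin n → L, IsBasisOf B b ∧
      ∀ i : Fin n, ((a i)⁻¹ • (A : Set L)) ∩ (B : Set L) ⊆
        (Submodule.span K (b '' {j | j ≠ i}) : Set L)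

/-! ### Independent transversals of subspaces -/

/-- Rado's theorem for subspaces: a finite family of subspaces has an independent transversal as
soon as every subfamily `J` spans a space of dimension at least `#J`. -/
theorem exists_linearIndependent_transversal {K E ι : Type*} [Field K] [AddCommGroup E]
    [Module K E] [FiniteDimensional K E] [Fintype ι] [DecidableEq ι] (W : ι → Submodule K E)
    (h : ∀ J : Finset ι, J.card ≤ Module.finrank K (J.sup W : Submodule K E)) :
    ∃ w : ι → E, (∀ i, w i ∈ W i) ∧ LinearIndependent K w := by
  induction hN : ∑ i, Module.finrank K (W i) using Nat.strong_induction_on generalizing W with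
  | _ N ih =>
  subst hN
  by_cases h1 : ∀ i, Module.finrank K (W i) ≤ 1
  · have h2 : ∀ i, ∃ v : E, W i = Submodule.span K {v} := by
      intro i
      have := (finrank_le_one_iff (K := K) (V := W i)).1 (h1 i)
      obtain ⟨v, hv⟩ := this
      refine ⟨v, le_antisymm ?_ ?_⟩
      · intro x hx
        obtain ⟨c, hc⟩ := hv ⟨x, hx⟩
        exact Submodule.mem_span_singleton.2 ⟨c, by simpa using congrArg Subtype.val hc⟩
      · simpa only [Submodule.span_singleton_le_iff_mem] using v.2
    choose w hw using h2
    refine ⟨w, fun i => hw i ▸ Submodule.mem_span_singleton_self _, ?_⟩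
    rw [linearIndependent_iff_card_le_finrank_span]
    have h3 := h Finset.univ
    have h4 : (Finset.univ.sup W : Submodule K E) = Submodule.span K (Set.range w) := by
      rw [Submodule.span_range_eq_iSup, Finset.sup_univ_eq_iSup]
      exact iSup_congr hw
    rw [h4] at h3
    exact h3
  · push Not at h1
    obtain ⟨i, hi⟩ := h1
    -- Shrinking `W i` to a proper subspace `H` must break the condition, or induction applies.
    have key : ∀ H : Submodule K E, H < W i →
        (∃ w : ι → E, (∀ i, w i ∈ W i) ∧ LinearIndependent K w) ∨
        ∃ F : Finset ι, i ∉ F ∧ Module.finrank K (H ⊔ F.sup W : Submodule K E) ≤ F.card := by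
      intro H hH
      by_cases hc : ∀ J : Finset ι,
          J.card ≤ Module.finrank K (J.sup (Function.update W i H) : Submodule K E)
      · left
        have hle : ∀ j, Function.update W i H j ≤ W j := by
          intro j
          by_cases hj : j = i
          · subst hj; simpa using hH.le
          · simp [hj]
        obtain ⟨w, hw, hl⟩ := ih _ (by
          refine Finset.sum_lt_sum (fun j _ => Submodule.finrank_mono (hle j))
            ⟨i, Finset.mem_univ _, ?_⟩
          rw [Function.update_self]
          exact Submodule.finrank_lt_finrank_of_lt hH) (Function.update W i H) hc rfl
        exact ⟨w, fun j => hle j (hw j), hl⟩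
      · right
        push Not at hc
        obtain ⟨J, hJ⟩ := hc
        have hcongr : ∀ F : Finset ι, i ∉ F → F.sup (Function.update W i H) = F.sup W := by
          intro F hF
          refine Finset.sup_congr rfl fun j hj => ?_
          rw [Function.update_of_ne]
          rintro rfl
          exact hF hj
        have hiJ : i ∈ J := by
          by_contra hiJ
          rw [hcongr J hiJ] at hJ
          exact absurd (h J) (not_le.2 hJ)
        refine ⟨J.erase i, Finset.notMem_erase _ _, ?_⟩
        rw [← Finset.insert_erase hiJ, Finset.sup_insert, hcongr _ (Finset.notMem_erase _ _),
          Finset.card_insert_of_notMem (Finset.notMem_erase _ _)] at hJ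
        rw [Function.update_self] at hJ
        omega
    obtain ⟨x, hx, hx0⟩ : ∃ x ∈ W i, x ≠ 0 := by
      apply Submodule.exists_mem_ne_zero_of_ne_bot
      intro hb
      rw [hb, finrank_bot] at hi
      omega
    have hxle : Submodule.span K {x} ≤ W i := by simpa using hx
    have hlt1 : Submodule.span K {x} < W i := by
      refine lt_of_le_of_ne hxle fun he => ?_
      rw [← he, finrank_span_singleton hx0] at hi
      omega
    obtain ⟨C, hC⟩ := exists_isCompl (Submodule.span K {x})
    have hlt2 : C ⊓ W i < W i := by
      refine lt_of_le_of_ne inf_le_right fun he => hx0 ?_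
      have hxC : x ∈ C := (he.symm ▸ hx : x ∈ C ⊓ W i).1
      exact (Submodule.disjoint_def.1 hC.disjoint) x (Submodule.mem_span_singleton_self x) hxC
    have hsup : Submodule.span K {x} ⊔ C ⊓ W i = W i := by
      rw [← sup_inf_assoc_of_le C hxle, hC.sup_eq_top, top_inf_eq]
    rcases key _ hlt1 with hd | ⟨F, hF, hFc⟩
    · exact hd
    rcases key _ hlt2 with hd | ⟨G, hG, hGc⟩
    · exact hd
    -- Two failures contradict submodularity of the dimension.
    exfalso
    have e1 := Submodule.finrank_sup_add_finrank_inf_eq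
      (Submodule.span K {x} ⊔ F.sup W) (C ⊓ W i ⊔ G.sup W)
    have e2 : (insert i (F ∪ G)).card ≤ Module.finrank K
        ((Submodule.span K {x} ⊔ F.sup W) ⊔ (C ⊓ W i ⊔ G.sup W) : Submodule K E) := by
      refine (h _).trans (Submodule.finrank_mono (le_of_eq ?_))
      rw [Finset.sup_insert, Finset.sup_union, sup_sup_sup_comm, hsup]
    have e3 : (F ∩ G).card ≤ Module.finrank K
        ((Submodule.span K {x} ⊔ F.sup W) ⊓ (C ⊓ W i ⊔ G.sup W) : Submodule K E) := by
      refine (h _).trans (Submodule.finrank_mono (le_inf ?_ ?_))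
      · exact (Finset.sup_mono Finset.inter_subset_left).trans le_sup_right
      · exact (Finset.sup_mono Finset.inter_subset_right).trans le_sup_right
    rw [Finset.card_insert_of_notMem (by simp [hF, hG])] at e2
    have e4 := Finset.card_union_add_card_inter F G
    omega

/-- Dual form of Rado's theorem: applied to the annihilators of the `U i`, it gives independent
functionals `φ i` vanishing on `U i`, and `b` is the basis of `V` dual to `φ`. -/
theorem exists_basis_avoiding {K V : Type*} [Field K] [AddCommGroup V] [Module K V]
    [FiniteDimensional K V] {n : ℕ} (hV : Module.finrank K V = n) (U : Fin n → Submodule K V)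
    (h : ∀ J : Finset (Fin n), Module.finrank K (J.inf U : Submodule K V) + J.card ≤ n) :
    ∃ b : Module.Basis (Fin n) K V, ∀ i, U i ≤ Submodule.span K (b '' {j | j ≠ i}) := by
  have hsup : ∀ J : Finset (Fin n),
      (J.inf U).dualAnnihilator = J.sup fun i => (U i).dualAnnihilator := by
    intro J
    induction J using Finset.induction_on with
    | empty => simp
    | insert i J _ ih => rw [Finset.inf_insert, Finset.sup_insert, ← ih,
        Subspace.dualAnnihilator_inf_eq]
  obtain ⟨φ, hφ, hli⟩ := exists_linearIndependent_transversal
    (fun i => (U i).dualAnnihilator) (by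
      intro J
      rw [← hsup]
      have := Subspace.finrank_add_finrank_dualAnnihilator_eq (J.inf U)
      have := h J
      omega)
  let Φ : Module.Basis (Fin n) K (Module.Dual K V) :=
    basisOfLinearIndependentOfCardEqFinrank' φ hli (by simp [Subspace.dual_finrank_eq, hV])
  have hΦ : ∀ i, Φ i = φ i := fun i => by simp [Φ]
  let b : Module.Basis (Fin n) K V := Φ.dualBasis.map (Module.evalEquiv K V).symm
  refine ⟨b, fun i x hx => ?_⟩
  have hrepr : b.repr x i = φ i x := by
    rw [← hΦ]
    simp [b, Module.Basis.map_repr]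
  rw [Module.Basis.mem_span_image]
  intro j hj
  rintro rfl
  simp only [Finset.mem_coe, Finsupp.mem_support_iff] at hj
  exact hj (hrepr.trans ((Submodule.mem_dualAnnihilator _).1 (hφ j) x hx))

/-! ### The Dyson transform and stability under `K(x)` -/

/-- The linear Dyson transform. For nonzero `e ∈ V`, replacing `(V, U)` by
`(V + eU, {u ∈ U : e u ∈ V})` keeps `V * U ⊆ A` and `dim V + dim U`, and strictly shrinks `U`
unless `eU ⊆ V`; so a pair with `dim U` minimal satisfies `V * U ⊆ V`. -/
theorem exists_stable_pair {K L : Type*} [Field K] [Field L] [Algebra K L]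
    (n : ℕ) (A B : Submodule K L) [FiniteDimensional K A] [FiniteDimensional K B]
    (V U : Submodule K L) (hV : V ≤ A) (hU : U ≤ B)
    (hVU : ∀ v ∈ V, ∀ u ∈ U, v * u ∈ A)
    (hdim : n < Module.finrank K V + Module.finrank K U) :
    ∃ S R : Submodule K L, S ≤ A ∧ R ≤ B ∧ (∀ s ∈ S, ∀ r ∈ R, s * r ∈ S) ∧
      n < Module.finrank K S + Module.finrank K R := by
  induction hN : Module.finrank K U using Nat.strong_induction_on generalizing V U with
  | _ N ih =>
  subst hN
  by_cases hst : ∀ v ∈ V, ∀ u ∈ U, v * u ∈ V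
  · exact ⟨V, U, hV, hU, hst, hdim⟩
  push Not at hst
  obtain ⟨e, he, u₀, hu₀, hne⟩ := hst
  have he0 : e ≠ 0 := by
    rintro rfl
    simp at hne
  have : FiniteDimensional K V := Submodule.finiteDimensional_of_le hV
  have : FiniteDimensional K U := Submodule.finiteDimensional_of_le hU
  let m : L →ₗ[K] L := LinearMap.mulLeft K e
  have hm : Function.Injective m := fun x y hxy => mul_left_cancel₀ he0 hxy
  let U' : Submodule K L := U ⊓ V.comap m
  have hU'lt : U' < U := lt_of_le_of_ne inf_le_left fun h =>
    hne ((h.symm ▸ hu₀ : u₀ ∈ U').2)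
  have hmap : ∀ P : Submodule K L, Module.finrank K (P.map m) = Module.finrank K P := fun P =>
    (P.equivMapOfInjective m hm).symm.finrank_eq
  have hinf : V ⊓ U.map m = U'.map m := by
    ext x
    constructor
    · rintro ⟨hx, u, hu, rfl⟩
      exact ⟨u, ⟨hu, hx⟩, rfl⟩
    · rintro ⟨u, ⟨hu, hx⟩, rfl⟩
      exact ⟨hx, u, hu, rfl⟩
  have hd := Submodule.finrank_sup_add_finrank_inf_eq V (U.map m)
  rw [hinf, hmap, hmap] at hd
  refine ih _ (Submodule.finrank_lt_finrank_of_lt hU'lt) (V ⊔ U.map m) U' ?_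
    (inf_le_left.trans hU) ?_ (by omega) rfl
  · refine sup_le hV ?_
    rintro _ ⟨u, hu, rfl⟩
    exact hVU e he u hu
  · intro v hv u hu
    obtain ⟨v₁, hv₁, _, ⟨u₁, hu₁, rfl⟩, rfl⟩ := Submodule.mem_sup.1 hv
    -- `(e u₁) u = (e u) u₁`, and `e u ∈ V` by the choice of `U'`.
    have h2 : m u₁ * u = m u * u₁ := by
      simp only [m, LinearMap.mulLeft_apply]
      ring
    rw [add_mul, h2]
    exact A.add_mem (hVU _ hv₁ _ hu.1) (hVU _ hu.2 _ hu₁)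

/-- If a nonzero finite-dimensional `S` is stable under `x`, then `x` is algebraic, so
`K(x) = K[x]` preserves `S`. -/
theorem mul_mem_of_mem_adjoin {K L : Type*} [Field K] [Field L] [Algebra K L]
    (S : Submodule K L) [FiniteDimensional K S] (hS : S ≠ ⊥) (x : L)
    (hx : ∀ s ∈ S, s * x ∈ S) {a : L} (ha : a ∈ S) {y : L}
    (hy : y ∈ IntermediateField.adjoin K ({x} : Set L)) : a * y ∈ S := by
  have hint : IsIntegral K x := by
    refine isIntegral_of_smul_mem_submodule S hS (Module.Finite.iff_fg.1 inferInstance) x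
      fun s hs => ?_
    rw [smul_eq_mul, mul_comm]
    exact hx s hs
  rw [← IntermediateField.mem_toSubalgebra,
    IntermediateField.adjoin_simple_toSubalgebra_of_isAlgebraic hint.isAlgebraic] at hy
  induction hy using Algebra.adjoin_induction generalizing a with
  | mem z hz => rw [Set.mem_singleton_iff.1 hz]; exact hx a ha
  | algebraMap r => rw [mul_comm, ← Algebra.smul_def]; exact S.smul_mem r ha
  | add p q _ _ hp hq => rw [mul_add]; exact S.add_mem (hp ha) (hq ha)
  | mul p q _ _ hp hq => rw [← mul_assoc]; exact hq (hp ha)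

theorem exists_sup_eq_disjoint {K L : Type*} [Field K] [AddCommGroup L] [Module K L]
    {S A : Submodule K L} (h : S ≤ A) : ∃ Y, A = S ⊔ Y ∧ Disjoint S Y := by
  obtain ⟨C, hC⟩ := exists_isCompl S
  refine ⟨C ⊓ A, ?_, hC.disjoint.mono_right inf_le_left⟩
  rw [← sup_inf_assoc_of_le C h, hC.sup_eq_top, top_inf_eq]

/-! ### Matchings of bases -/

/-- If a basis `a` of `A` cannot be matched, `exists_basis_avoiding` fails for some index set `J`;
the pair is `V = span {a i : i ∈ J}` and `U = {b ∈ B : a i * b ∈ A for all i ∈ J}`. -/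
theorem exists_pair_of_not_matchedTo {K L : Type*} [Field K] [Field L] [Algebra K L]
    (n : ℕ) (A B : Submodule K L) [FiniteDimensional K B]
    (hB : Module.finrank K B = n) (h : ¬ MatchedTo A B n) :
    ∃ V U : Submodule K L, V ≤ A ∧ U ≤ B ∧ (∀ v ∈ V, ∀ u ∈ U, v * u ∈ A) ∧
      n < Module.finrank K V + Module.finrank K U := by
  classical
  simp only [MatchedTo] at h
  push Not at h
  obtain ⟨a, ⟨hali, haspan⟩, hno⟩ := h
  let U : Fin n → Submodule K B := fun i => A.comap (LinearMap.mulLeft K (a i) ∘ₗ B.subtype)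
  by_cases hc : ∀ J : Finset (Fin n), Module.finrank K (J.inf U : Submodule K B) + J.card ≤ n
  · exfalso
    obtain ⟨b, hb⟩ := exists_basis_avoiding hB U hc
    have hbB : IsBasisOf B (fun i => (b i : L)) := by
      refine ⟨b.linearIndependent.map' B.subtype B.ker_subtype, ?_⟩
      have : Set.range (fun i => (b i : L)) = B.subtype '' Set.range b := by
        rw [← Set.range_comp]; rfl
      rw [this, ← Submodule.map_span, b.span_eq, Submodule.map_subtype_top]
    obtain ⟨i, hi⟩ := hno _ hbB
    apply hi
    rintro x ⟨hx, hxB⟩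
    rw [Set.mem_inv_smul_set_iff₀ (hali.ne_zero i)] at hx
    have h1 : (⟨x, hxB⟩ : B) ∈ U i := hx
    have h2 := Submodule.mem_map_of_mem (f := B.subtype) (hb i h1)
    rw [Submodule.map_span, ← Set.image_comp] at h2
    exact h2
  · push Not at hc
    obtain ⟨J, hJ⟩ := hc
    refine ⟨Submodule.span K (a '' J), (J.inf U).map B.subtype, ?_, Submodule.map_subtype_le _ _,
      ?_, ?_⟩
    · rw [← haspan]
      exact Submodule.span_mono (Set.image_subset_range _ _)
    · rintro v hv _ ⟨u, hu, rfl⟩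
      have hle : Submodule.span K (a '' J) ≤ A.comap (LinearMap.mulRight K (u : L)) := by
        rw [Submodule.span_le]
        rintro _ ⟨i, hi, rfl⟩
        exact (Finset.inf_le (f := U) hi) hu
      exact hle hv
    · have h1 : Module.finrank K (Submodule.span K (a '' J)) = J.card := by
        have := finrank_span_eq_card (hali.comp ((↑) : J → Fin n) Subtype.val_injective)
        rw [Set.range_comp, Subtype.range_coe_subtype] at this
        simpa using this
      have h2 : Module.finrank K ((J.inf U).map B.subtype) =
          Module.finrank K (J.inf U : Submodule K B) :=
        (Submodule.equivMapOfInjective B.subtype B.injective_subtype _).symm.finrank_eq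
      omega

/-- A basis of `B` matched to a basis of `A` adapted to `A = S ⊕ Y` would have `dim Y` members whose
span contains `R`. -/
theorem not_matchedTo_of_mul_mem {K L : Type*} [Field K] [Field L] [Algebra K L]
    (n : ℕ) (A B R S Y : Submodule K L) [FiniteDimensional K A]
    (hA : Module.finrank K A = n) (hRB : R ≤ B) (hAS : A = S ⊔ Y) (hd : Disjoint S Y)
    (hSR : ∀ s ∈ S, ∀ r ∈ R, s * r ∈ A)
    (hdim : Module.finrank K Y < Module.finrank K R) : ¬ MatchedTo A B n := by
  classical
  intro hM
  have hSA : S ≤ A := hAS ▸ le_sup_left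
  have hYA : Y ≤ A := hAS ▸ le_sup_right
  have : FiniteDimensional K S := Submodule.finiteDimensional_of_le hSA
  have : FiniteDimensional K Y := Submodule.finiteDimensional_of_le hYA
  have hsum := Submodule.finrank_sup_add_finrank_inf_eq S Y
  rw [← hAS, hd.eq_bot, finrank_bot, hA, add_zero] at hsum
  let bS := Module.finBasis K S
  let bY := Module.finBasis K Y
  let ι := Fin (Module.finrank K S) ⊕ Fin (Module.finrank K Y)
  let f : ι → L := Sum.elim (fun i => (bS i : L)) (fun i => (bY i : L))
  have hspS : Submodule.span K (Set.range fun i => (bS i : L)) = S := by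
    have : Set.range (fun i => (bS i : L)) = S.subtype '' Set.range bS := by
      rw [← Set.range_comp]; rfl
    rw [this, ← Submodule.map_span, bS.span_eq, Submodule.map_subtype_top]
  have hspY : Submodule.span K (Set.range fun i => (bY i : L)) = Y := by
    have : Set.range (fun i => (bY i : L)) = Y.subtype '' Set.range bY := by
      rw [← Set.range_comp]; rfl
    rw [this, ← Submodule.map_span, bY.span_eq, Submodule.map_subtype_top]
  have hf : LinearIndependent K f := by
    refine LinearIndependent.sum_type (bS.linearIndependent.map' S.subtype S.ker_subtype)
      (bY.linearIndependent.map' Y.subtype Y.ker_subtype) ?_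
    change Disjoint (Submodule.span K (Set.range fun i => (bS i : L)))
      (Submodule.span K (Set.range fun i => (bY i : L)))
    rw [hspS, hspY]
    exact hd
  have hfs : Submodule.span K (Set.range f) = A := by
    rw [Set.Sum.elim_range, Submodule.span_union, hspS, hspY, hAS]
  let e : Fin n ≃ ι := (Fintype.equivFinOfCardEq (by simp [ι, hsum])).symm
  obtain ⟨b, ⟨hbli, hbspan⟩, hb⟩ := hM (f ∘ e) ⟨hf.comp _ e.injective, by
    rw [e.surjective.range_comp, hfs]⟩
  let c : Fin (Module.finrank K Y) → Fin n := fun j => e.symm (Sum.inr j)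
  have hRle : R ≤ Submodule.span K (Set.range (b ∘ c)) := by
    intro r hr
    rw [Set.range_comp]
    have hrb : r ∈ Submodule.span K (Set.range b) := hbspan ▸ hRB hr
    obtain ⟨l, rfl⟩ := Finsupp.mem_span_range_iff_exists_finsupp.1 hrb
    change Finsupp.linearCombination K b l ∈ _
    rw [Finsupp.mem_span_image_iff_linearCombination]
    refine ⟨l, ?_, rfl⟩
    rw [Finsupp.mem_supported]
    intro i hi
    rcases hei : e i with s | y
    · exfalso
      have hfi : (f ∘ e) i = bS s := by simp [f, hei]
      have hmem := hb i ⟨(Set.mem_inv_smul_set_iff₀ (hfi ▸ by simpa using bS.ne_zero s) _ _).2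
        (hfi ▸ hSR _ (bS s).2 _ hr), hRB hr⟩
      obtain ⟨l', hl', he'⟩ := (Finsupp.mem_span_image_iff_linearCombination K).1 hmem
      have hll : l' = l := hbli he'
      rw [Finsupp.mem_supported, hll] at hl'
      exact hl' hi rfl
    · exact ⟨y, by simp [c, ← hei]⟩
  have : FiniteDimensional K (Submodule.span K (Set.range (b ∘ c))) :=
    FiniteDimensional.span_of_finite K (Set.finite_range _)
  have h1 := Submodule.finrank_mono hRle
  have h2 := finrank_range_le_card (R := K) (b ∘ c)
  rw [Fintype.card_fin] at h2
  simp only [Set.finrank] at h2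
  omega

theorem stmt_13 {K L : Type*} [Field K] [Field L] [Algebra K L]
    (hKL : ¬ Function.Surjective (algebraMap K L))
    (n : ℕ) (hn : 0 < n) (A B : Submodule K L)
    (hA : Module.finrank K A = n) (hB : Module.finrank K B = n) :
    ¬ MatchedTo A B n ↔
    ∃ R S Y Z : Submodule K L, R ≠ ⊥ ∧ R ≤ B ∧
      A = S ⊔ Y ∧ Disjoint S Y ∧
      B = R ⊔ Z ∧ Disjoint R Z ∧
      (∀ x ∈ R, ∀ a ∈ S, ∀ y ∈ IntermediateField.adjoin K ({x} : Set L), a * y ∈ S) ∧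
      Module.finrank K Y < Module.finrank K R := by
  have : FiniteDimensional K A := Module.finite_of_finrank_pos (by omega)
  have : FiniteDimensional K B := Module.finite_of_finrank_pos (by omega)
  constructor
  · intro h
    obtain ⟨V, U, hV, hU, hVU, hdim⟩ := exists_pair_of_not_matchedTo n A B hB h
    obtain ⟨S, R, hS, hR, hSR, hlt⟩ := exists_stable_pair n A B V U hV hU hVU hdim
    have : FiniteDimensional K S := Submodule.finiteDimensional_of_le hS
    have hSn := Submodule.finrank_mono hS
    have hRn := Submodule.finrank_mono hR
    have hS0 : S ≠ ⊥ := by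
      rintro rfl
      rw [finrank_bot] at hlt
      omega
    have hR0 : R ≠ ⊥ := by
      rintro rfl
      rw [finrank_bot] at hlt
      omega
    obtain ⟨Y, hY, hSY⟩ := exists_sup_eq_disjoint hS
    obtain ⟨Z, hZ, hRZ⟩ := exists_sup_eq_disjoint hR
    have hYA : Y ≤ A := hY ▸ le_sup_right
    have : FiniteDimensional K Y := Submodule.finiteDimensional_of_le hYA
    refine ⟨R, S, Y, Z, hR0, hR, hY, hSY, hZ, hRZ, fun x hx a ha y hy =>
      mul_mem_of_mem_adjoin S hS0 x (fun s hs => hSR s hs x hx) ha hy, ?_⟩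
    have hsum := Submodule.finrank_sup_add_finrank_inf_eq S Y
    rw [← hY, hSY.eq_bot, finrank_bot] at hsum
    omega
  · rintro ⟨R, S, Y, Z, -, hRB, hAS, hd, -, -, hst, hdim⟩
    refine not_matchedTo_of_mul_mem n A B R S Y hA hRB hAS hd (fun s hs r hr => ?_) hdim
    rw [hAS]
    exact Submodule.mem_sup_left
      (hst r hr s hs r (IntermediateField.mem_adjoin_simple_self K r))
end

section
/- Let K ⊊ L be a field extension, and let A and B be finite-dimensional K-subspaces of L with dim A = dim B > 0. Assume B is a Chowla subspace, i.e., for every nonzero x ∈ B, [K(x):K] ≥ dim_K B + 1. Then A is matched to B. -/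
/-!
Fix a basis `a` of `A` and put `Eᵢ = {x ∈ B | aᵢ x ∈ A}`. A basis `b` of `B` matches `a` exactly when
the coordinate functionals `φᵢ` of `b` vanish on `Eᵢ`, so the task is to find linearly independent
`φᵢ` in the annihilators of the `Eᵢ` in the dual of `B`. By Rado's theorem for subspaces
(`exists_linearIndependent_mem`), such functionals exist as soon as
`dim (⋂_{i ∈ J} Eᵢ) + |J| ≤ n` for every `J`.

For nonempty `J` let `V` be the span of the `aᵢ`, `i ∈ J`, and `W = ⋂_{i ∈ J} Eᵢ`. Then
`V (W + K) ⊆ A`, and `1 ∉ B` since the Chowla condition fails at `1`. So the bound is the inequality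
`dim V + dim (W + K) ≤ dim A + 1`, a linear version of Chowla's theorem
(`finrank_add_finrank_le_of_mul_mem`). It is proved with the Dyson transform
`(V, W') ↦ (V + v W', W' ∩ v⁻¹ V)` for some `v ∈ V`, which keeps the sum of the dimensions and
keeps `1` in the second space. The transform can only fail to shrink the second space if `V` is
stable under multiplication by `W'`; then `V` is a `K(x)`-space for each `x ∈ W'`, which is too
large when `[K(x) : K] > dim A`.
-/

open Pointwise

/-- Rado's theorem for subspaces: a finite family of subspaces has a linearly independent system
of representatives if the sum of any `k` of them has dimension at least `k`. -/
theorem exists_linearIndependent_mem {K V ι : Type*} [Field K] [AddCommGroup V] [Module K V]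
    [FiniteDimensional K V] [Fintype ι] [DecidableEq ι] (F : ι → Submodule K V)
    (hF : ∀ J : Finset ι, J.card ≤ Module.finrank K (J.sup F : Submodule K V)) :
    ∃ v : ι → V, LinearIndependent K v ∧ ∀ i, v i ∈ F i := by
  induction hN : ∑ i, Module.finrank K (F i) using Nat.strong_induction_on generalizing F with
  | _ N ih =>
  subst hN
  by_cases hsmall : ∀ i, Module.finrank K (F i) ≤ 1
  · -- All the spaces are lines, so generators of them span a space of dimension at least `|ι|`.
    choose v hv using fun i => finrank_le_one_iff.mp (hsmall i)
    refine ⟨fun i => (v i : V), ?_, fun i => (v i).2⟩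
    rw [linearIndependent_iff_card_le_finrank_span]
    refine (hF Finset.univ).trans (Submodule.finrank_mono (Finset.sup_le fun i _ x hx => ?_))
    obtain ⟨c, hc⟩ := hv i ⟨x, hx⟩
    have hx' : x = c • (v i : V) := by simpa using (congrArg Subtype.val hc).symm
    rw [hx']
    exact Submodule.smul_mem _ _ (Submodule.subset_span ⟨i, rfl⟩)
  · push Not at hsmall
    obtain ⟨i, hi⟩ := hsmall
    -- `F i` is the sum of two proper subspaces; one of them can replace `F i`.
    obtain ⟨H₁, H₂, h₁, h₂, hsup⟩ : ∃ H₁ H₂ : Submodule K V, H₁ < F i ∧ H₂ < F i ∧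
        H₁ ⊔ H₂ = F i := by
      obtain ⟨x, hx, hx0⟩ := (F i).exists_mem_ne_zero_of_ne_bot (by
        intro h; rw [h] at hi; simp at hi)
      have hle : Submodule.span K {x} ≤ F i := by simpa using hx
      obtain ⟨C, hC⟩ := Submodule.exists_isCompl (Submodule.span K {x})
      refine ⟨Submodule.span K {x}, C ⊓ F i, lt_of_le_of_ne hle ?_,
        lt_of_le_of_ne inf_le_right ?_, ?_⟩
      · intro h
        rw [← h, finrank_span_singleton hx0] at hi
        omega
      · intro h
        have hxC : x ∈ C := (inf_eq_right.mp h) hx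
        exact hx0 ((Submodule.disjoint_def.mp hC.disjoint) x
          (Submodule.mem_span_singleton_self x) hxC)
      · rw [← sup_inf_assoc_of_le C hle, hC.sup_eq_top, top_inf_eq]
    have key : ∀ H : Submodule K V, H < F i →
        (∀ J : Finset ι, i ∉ J → J.card + 1 ≤ Module.finrank K (H ⊔ J.sup F : Submodule K V)) →
        ∃ v : ι → V, LinearIndependent K v ∧ ∀ i, v i ∈ F i := by
      intro H hH hJ
      have hlt := Submodule.finrank_lt_finrank_of_lt hH
      have hsupJ : ∀ J : Finset ι, i ∉ J → J.sup (Function.update F i H) = J.sup F := by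
        intro J hiJ
        refine Finset.sup_congr rfl fun j hj => ?_
        rw [Function.update_of_ne (ne_of_mem_of_not_mem hj hiJ)]
      obtain ⟨v, hv, hvm⟩ := ih (∑ j, Module.finrank K (Function.update F i H j)) (by
          refine Finset.sum_lt_sum (fun j _ => ?_) ⟨i, Finset.mem_univ _, by rwa [Function.update_self]⟩
          by_cases hji : j = i
          · subst hji; rw [Function.update_self]; exact hlt.le
          · rw [Function.update_of_ne hji]) (Function.update F i H) (by
          intro J
          by_cases hiJ : i ∈ J
          · rw [← Finset.insert_erase hiJ, Finset.sup_insert,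
              Finset.card_insert_of_notMem (Finset.notMem_erase i J),
              hsupJ _ (Finset.notMem_erase i J), Function.update_self]
            exact hJ _ (Finset.notMem_erase i J)
          · rw [hsupJ J hiJ]
            exact hF J) rfl
      refine ⟨v, hv, fun j => ?_⟩
      have := hvm j
      by_cases hji : j = i
      · subst hji
        rw [Function.update_self] at this
        exact hH.le this
      · rwa [Function.update_of_ne hji] at this
    by_contra hcon
    have n₁ := mt (key H₁ h₁) hcon
    have n₂ := mt (key H₂ h₂) hcon
    push Not at n₁ n₂
    obtain ⟨J₁, hi₁, hJ₁⟩ := n₁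
    obtain ⟨J₂, hi₂, hJ₂⟩ := n₂
    -- Submodularity of the dimension makes two violating sets incompatible.
    have hmod := Submodule.finrank_sup_add_finrank_inf_eq (H₁ ⊔ J₁.sup F) (H₂ ⊔ J₂.sup F)
    have hU := hF (insert i (J₁ ∪ J₂))
    have hI := hF (J₁ ∩ J₂)
    rw [Finset.card_insert_of_notMem (by simp [hi₁, hi₂]), Finset.sup_insert, Finset.sup_union,
      ← hsup, sup_sup_sup_comm] at hU
    have hI' : Module.finrank K ((J₁ ∩ J₂).sup F : Submodule K V) ≤
        Module.finrank K ((H₁ ⊔ J₁.sup F) ⊓ (H₂ ⊔ J₂.sup F) : Submodule K V) :=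
      Submodule.finrank_mono (le_inf
        ((Finset.sup_mono Finset.inter_subset_left).trans le_sup_right)
        ((Finset.sup_mono Finset.inter_subset_right).trans le_sup_right))
    have hc := Finset.card_union_add_card_inter J₁ J₂
    omega

/-- A linear Chowla theorem: if `V W ⊆ U` with `V ≠ 0`, `1 ∈ W`, and no `x ∈ W` outside `K`
stabilizes a nonzero subspace of `U`, then `dim V + dim W ≤ dim U + 1`. -/
theorem finrank_add_finrank_le_of_mul_mem {K L : Type*} [Field K] [Field L] [Algebra K L]
    (U : Submodule K L) [FiniteDimensional K U] (V W : Submodule K L) [FiniteDimensional K W]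
    (hV : V ≠ ⊥) (h1 : (1 : L) ∈ W) (hVW : ∀ v ∈ V, ∀ w ∈ W, v * w ∈ U)
    (hst : ∀ x ∈ W, x ∉ Submodule.span K {(1 : L)} → ∀ M : Submodule K L, M ≤ U → M ≠ ⊥ →
      ¬ ∀ m ∈ M, x * m ∈ M) :
    Module.finrank K V + Module.finrank K W ≤ Module.finrank K U + 1 := by
  induction hN : Module.finrank K W using Nat.strong_induction_on generalizing V W with
  | _ N ih =>
  subst hN
  have hVU : V ≤ U := fun v hv => by simpa using hVW v hv 1 h1
  have : FiniteDimensional K V := Submodule.finiteDimensional_of_le hVU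
  by_cases hW : W ≤ Submodule.span K {(1 : L)}
  · have h := Submodule.finrank_mono hW
    rw [finrank_span_singleton one_ne_zero] at h
    have := Submodule.finrank_mono hVU
    omega
  · obtain ⟨x, hxW, hx1⟩ := SetLike.not_le_iff_exists.mp hW
    have hns := hst x hxW hx1 V hVU hV
    push Not at hns
    obtain ⟨v, hv, hxv⟩ := hns
    have hv0 : v ≠ 0 := by rintro rfl; simp at hxv
    -- The Dyson transform at `v`, written with `v W` and `v W ∩ V` to compare dimensions.
    let μ : L →ₗ[K] L := LinearMap.mulLeft K v
    have hμ : Function.Injective μ := fun y z h => mul_left_cancel₀ hv0 h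
    let W' : Submodule K L := W ⊓ V.comap μ
    have hW'le : W' ≤ W := inf_le_left
    have hW'lt : W' < W := lt_of_le_of_ne hW'le fun h => by
      have : x ∈ W' := h ▸ hxW
      exact hxv (by simpa [μ, mul_comm] using this.2)
    have : FiniteDimensional K W' := Submodule.finiteDimensional_of_le hW'le
    have hrec := ih _ (Submodule.finrank_lt_finrank_of_lt hW'lt) (V ⊔ W.map μ) W'
      (fun h => hV (le_bot_iff.mp (h ▸ le_sup_left)))
      ⟨h1, by simpa [μ] using hv⟩
      (by
        rintro y hy w ⟨hw, hwv⟩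
        obtain ⟨y₁, hy₁, y₂, hy₂, rfl⟩ := Submodule.mem_sup.mp hy
        obtain ⟨z, hz, rfl⟩ := hy₂
        rw [add_mul]
        refine U.add_mem (hVW _ hy₁ _ hw) ?_
        have : μ z * w = (v * w) * z := by simp only [μ, LinearMap.mulLeft_apply]; ring
        rw [this]
        exact hVW _ hwv _ hz)
      (fun y hy => hst y (hW'le hy)) rfl
    have hmod := Submodule.finrank_sup_add_finrank_inf_eq V (W.map μ)
    have e₁ : Module.finrank K (W.map μ) = Module.finrank K W :=
      (Submodule.equivMapOfInjective μ hμ W).finrank_eq.symm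
    have e₂ : Module.finrank K (V ⊓ W.map μ : Submodule K L) = Module.finrank K W' := by
      have : V ⊓ W.map μ = W'.map μ := by
        rw [inf_comm, Submodule.map_inf_eq_map_inf_comap]
      rw [this, ← (Submodule.equivMapOfInjective μ hμ W').finrank_eq]
    omega

/-- A nonzero finite-dimensional `K`-subspace stable under multiplication by `w` is a
`K(w)`-space, so its dimension is at least `[K(w) : K]`. -/
theorem rank_adjoin_le_of_stable {K L : Type*} [Field K] [Field L] [Algebra K L]
    (M : Submodule K L) [FiniteDimensional K M] (hM : M ≠ ⊥) (w : L)
    (hw : ∀ m ∈ M, w * m ∈ M) :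
    Module.rank K (IntermediateField.adjoin K ({w} : Set L)) ≤ Module.finrank K M := by
  obtain ⟨m, hm, hm0⟩ := M.exists_mem_ne_zero_of_ne_bot hM
  have hst : ∀ y ∈ Algebra.adjoin K ({w} : Set L), ∀ z ∈ M, y * z ∈ M := by
    intro y hy
    induction hy using Algebra.adjoin_induction with
    | mem x hx => rw [Set.mem_singleton_iff.mp hx]; exact hw
    | algebraMap r =>
      intro z hz
      rw [← Algebra.smul_def]
      exact M.smul_mem r hz
    | add x y _ _ hx hy =>
      intro z hz
      rw [add_mul]
      exact M.add_mem (hx z hz) (hy z hz)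
    | mul x y _ _ hx hy =>
      intro z hz
      rw [mul_assoc]
      exact hx _ (hy z hz)
  let f : Algebra.adjoin K ({w} : Set L) →ₗ[K] M :=
    ((LinearMap.mulRight K m).comp (Algebra.adjoin K ({w} : Set L)).val.toLinearMap).codRestrict M
      fun y => hst y y.2 m hm
  have hf : Function.Injective f := fun y z h =>
    Subtype.ext (mul_right_cancel₀ hm0 (congrArg Subtype.val h))
  have : FiniteDimensional K (Algebra.adjoin K ({w} : Set L)) :=
    FiniteDimensional.of_injective f hf
  have hint : IsIntegral K w :=
    (Algebra.IsIntegral.isIntegral (R := K)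
      (⟨w, Algebra.self_mem_adjoin_singleton K w⟩ : Algebra.adjoin K ({w} : Set L))).map
      (Algebra.adjoin K ({w} : Set L)).val
  have heq := IntermediateField.adjoin_simple_toSubalgebra_of_isAlgebraic hint.isAlgebraic
  have hr := LinearMap.rank_le_of_injective f hf
  rw [← heq, ← Module.finrank_eq_rank K M] at hr
  exact hr

theorem stmt_15 {K L : Type*} [Field K] [Field L] [Algebra K L]
    (hKL : ¬ Function.Surjective (algebraMap K L))
    (n : ℕ) (hn : 0 < n) (A B : Submodule K L)
    (hA : Module.finrank K A = n) (hB : Module.finrank K B = n)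
    (hChowla : ∀ x ∈ B, x ≠ 0 →
      (Module.finrank K B : Cardinal) + 1 ≤
        Module.rank K (IntermediateField.adjoin K ({x} : Set L))) :
    MatchedTo A B n := by
  rintro a ⟨ha, haA⟩
  have : FiniteDimensional K A := Module.finite_of_finrank_pos (hA ▸ hn)
  have : FiniteDimensional K B := Module.finite_of_finrank_pos (hB ▸ hn)
  have hmem : ∀ i, a i ∈ A := fun i => haA ▸ Submodule.subset_span ⟨i, rfl⟩
  have hstab : ∀ w ∈ B, w ≠ 0 → ∀ M : Submodule K L, M ≤ A → M ≠ ⊥ →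
      ¬ ∀ m ∈ M, w * m ∈ M := by
    intro w hw hw0 M hMA hM hst
    have : FiniteDimensional K M := Submodule.finiteDimensional_of_le hMA
    have h := (hChowla w hw hw0).trans (rank_adjoin_le_of_stable M hM w hst)
    have h' : Module.finrank K B + 1 ≤ Module.finrank K M := by exact_mod_cast h
    have := Submodule.finrank_mono hMA
    omega
  have hA0 : A ≠ ⊥ := by rintro rfl; simp at hA; omega
  have hB1 : (1 : L) ∉ B := fun h =>
    hstab 1 h one_ne_zero A le_rfl hA0 fun m hm => by simpa using hm
  let E : Fin n → Submodule K B := fun i => A.comap ((LinearMap.mulLeft K (a i)).comp B.subtype)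
  have hE : ∀ i (x : B), x ∈ E i ↔ a i * x ∈ A := fun i x => Iff.rfl
  have hdim : ∀ J : Finset (Fin n), J.card + Module.finrank K (J.inf E : Submodule K B) ≤ n := by
    intro J
    rcases J.eq_empty_or_nonempty with rfl | ⟨i, hi⟩
    · rw [Finset.inf_empty, finrank_top, Finset.card_empty, hB, zero_add]
    let V : Submodule K L := Submodule.span K (Set.range fun j : J => a j)
    let W : Submodule K L := (J.inf E).map B.subtype
    have hWB : W ≤ B := Submodule.map_subtype_le B _
    have hVcard : Module.finrank K V = J.card := by
      have := finrank_span_eq_card (ha.comp (fun j : J => (j : Fin n)) Subtype.val_injective)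
      rwa [Fintype.card_coe] at this
    have hWfin : Module.finrank K W = Module.finrank K (J.inf E : Submodule K B) :=
      (Submodule.equivMapOfInjective B.subtype B.injective_subtype _).finrank_eq.symm
    have hWdim : Module.finrank K (W ⊔ Submodule.span K {(1 : L)} : Submodule K L) =
        Module.finrank K W + 1 := by
      have h := Submodule.finrank_sup_add_finrank_inf_eq W (Submodule.span K {(1 : L)})
      have hd : W ⊓ Submodule.span K {(1 : L)} = ⊥ := by
        rw [← disjoint_iff, Submodule.disjoint_span_singleton' one_ne_zero]
        exact fun h => hB1 (hWB h)
      rw [hd, finrank_bot, finrank_span_singleton one_ne_zero] at h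
      omega
    have hVA : V ≤ A := Submodule.span_le.mpr (by rintro _ ⟨j, rfl⟩; exact hmem j)
    have hVW : ∀ v ∈ V, ∀ w ∈ W, v * w ∈ A := by
      rintro v hv _ ⟨w, hw, rfl⟩
      have : V ≤ A.comap (LinearMap.mulRight K (w : L)) := by
        refine Submodule.span_le.mpr ?_
        rintro _ ⟨j, rfl⟩
        exact (hE j w).mp ((Finset.inf_le j.2 : J.inf E ≤ E j) hw)
      exact this hv
    have := finrank_add_finrank_le_of_mul_mem A V (W ⊔ Submodule.span K {(1 : L)})
      (by
        intro h
        have hai : a i ∈ V := Submodule.subset_span ⟨⟨i, hi⟩, rfl⟩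
        rw [h, Submodule.mem_bot] at hai
        exact ha.ne_zero i hai)
      (Submodule.mem_sup_right (Submodule.mem_span_singleton_self 1))
      (by
        intro v hv y hy
        obtain ⟨w, hw, z, hz, rfl⟩ := Submodule.mem_sup.mp hy
        obtain ⟨c, rfl⟩ := Submodule.mem_span_singleton.mp hz
        rw [mul_add, mul_smul_comm, mul_one]
        exact A.add_mem (hVW v hv w hw) (A.smul_mem c (hVA hv)))
      (by
        -- If `w + c` with `c ∈ K` stabilizes `M`, then so does `w`.
        intro y hy hy1 M hMA hM hst
        obtain ⟨w, hw, z, hz, rfl⟩ := Submodule.mem_sup.mp hy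
        have hw0 : w ≠ 0 := by rintro rfl; exact hy1 (by simpa using hz)
        obtain ⟨c, rfl⟩ := Submodule.mem_span_singleton.mp hz
        refine hstab w (hWB hw) hw0 M hMA hM fun m hm => ?_
        have h := M.sub_mem (hst m hm) (M.smul_mem c hm)
        rwa [add_mul, smul_mul_assoc, one_mul, add_sub_cancel_right] at h)
    omega
  have hsup : ∀ J : Finset (Fin n),
      J.sup (fun i => (E i).dualAnnihilator) = (J.inf E).dualAnnihilator := by
    intro J
    induction J using Finset.induction_on with
    | empty => simp
    | insert i J _ ih => rw [Finset.sup_insert, Finset.inf_insert, ih,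
        Subspace.dualAnnihilator_inf_eq]
  obtain ⟨φ, hφ, hφE⟩ := exists_linearIndependent_mem (fun i => (E i).dualAnnihilator) (by
    intro J
    rw [hsup]
    have h₁ := Subspace.finrank_add_finrank_dualAnnihilator_eq (J.inf E)
    have h₂ := hdim J
    omega)
  -- The `φᵢ` are the coordinates of an isomorphism `B ≃ Kⁿ`, hence of a basis of `B`.
  have hφspan : Submodule.span K (Set.range φ) = ⊤ :=
    hφ.span_eq_top_of_card_eq_finrank' (by simp [Subspace.dual_finrank_eq, hB])
  have hinj : Function.Injective (LinearMap.pi φ) := by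
    rw [← LinearMap.ker_eq_bot, LinearMap.ker_eq_bot']
    intro x hx
    refine (Module.forall_dual_apply_eq_zero_iff K x).mp fun ψ => ?_
    have hle : Submodule.span K (Set.range φ) ≤ LinearMap.ker (Module.Dual.eval K B x) := by
      refine Submodule.span_le.mpr ?_
      rintro _ ⟨i, rfl⟩
      exact congrFun hx i
    exact hle (hφspan ▸ Submodule.mem_top)
  let b : Module.Basis (Fin n) K B := Module.Basis.ofEquivFun
    (LinearEquiv.ofInjectiveOfFinrankEq (LinearMap.pi φ) hinj (by simp [hB]))
  have hb : ∀ x i, b.repr x i = φ i x := fun x i => rfl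
  have himg : ∀ s : Set (Fin n), Submodule.span K ((fun i => (b i : L)) '' s) =
      (Submodule.span K (b '' s)).map B.subtype := by
    intro s
    rw [Submodule.map_span, Set.image_image]
    rfl
  refine ⟨fun i => (b i : L), ⟨b.linearIndependent.map' B.subtype B.ker_subtype, ?_⟩, ?_⟩
  · rw [← Set.image_univ, himg, Set.image_univ, b.span_eq, Submodule.map_subtype_top]
  · rintro i x ⟨hxA, hxB⟩
    rw [himg]
    refine ⟨⟨x, hxB⟩, ?_, rfl⟩
    have hxE : (⟨x, hxB⟩ : B) ∈ E i :=
      (hE i _).mpr ((Set.mem_inv_smul_set_iff₀ (ha.ne_zero i) _ _).mp hxA)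
    have h0 : φ i ⟨x, hxB⟩ = 0 := (Submodule.mem_dualAnnihilator _).mp (hφE i) _ hxE
    refine b.mem_span_image.mpr fun j hj => ?_
    rintro rfl
    exact Finsupp.mem_support_iff.mp hj ((hb _ _).trans h0)
end

section
/- Let K ⊊ L be a field extension, and let A and B be n-dimensional K-subspaces of L with n > 0 and 1 ∉ A. Assume that for every nonzero K-subspace R ⊆ B we have dim_K(K(R) ∩ A) ≥ dim_K R. Then A is matched to B. -/
/-!
Linear duality turns the matching problem into a transversal problem. Put
`Wᵢ = aᵢ⁻¹A ∩ B`. A basis of `B` matched to `(aᵢ)` is the dual basis of a linearly independent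
family of functionals `φᵢ` on `B` with `φᵢ` vanishing on `Wᵢ`. By Rado's theorem for subspaces
(`exists_linearIndependent_of_rado`) such a family exists as soon as, for every `J`, the space
`R = ⋂_{i ∈ J} Wᵢ` satisfies `dim R + |J| ≤ n`.

With `S = span {aᵢ : i ∈ J}` one has `S ≤ A`, `S R ≤ A`, and the inequality to prove is
`dim S + dim R ≤ dim A` (`finrank_add_finrank_le`). Start from the pair `(S, V)`, `V = R + K`, for
which `S V ≤ A` and `1 ∈ V`. For `e ∈ S`, Dyson's transform
`(S, V) ↦ (S + eV, V ∩ e⁻¹S)` preserves `dim S + dim V`, the inclusion of the product in `A` and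
the membership `1 ∈ V`; it shrinks `V` unless `eV ≤ S`. Iterating leads to a pair `(S', V')` with
`S' V' ≤ S' ≤ A`. Let `R' = V' ∩ R`. As `S'` is finite-dimensional, it is stable under the field
`K(R')`, and as `1 ∉ S'` it meets `K(R')` trivially. So `S'` and `K(R') ∩ A` are independent
subspaces of `A`, and the hypothesis gives `dim A ≥ dim S' + dim R' ≥ dim S + dim R`.
-/

open Pointwise

/-- Rado's theorem for finitely many subspaces of a finite-dimensional space: the subspaces have a
linearly independent transversal if the sum of any `k` of them has dimension at least `k`. -/
theorem exists_linearIndependent_of_rado {K E ι : Type*} [Field K] [AddCommGroup E] [Module K E]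
    [FiniteDimensional K E] [Fintype ι] [DecidableEq ι] (U : ι → Submodule K E)
    (hU : ∀ J : Finset ι, J.card ≤ Module.finrank K ↥(J.sup U)) :
    ∃ u : ι → E, (∀ i, u i ∈ U i) ∧ LinearIndependent K u := by
  induction hm : ∑ i, Module.finrank K (U i) using Nat.strong_induction_on generalizing U with
  | _ m ih =>
  subst hm
  -- A subspace `P < U i` can replace `U i` unless some `J ∌ i` witnesses the failure.
  have key : ∀ (i : ι) (P : Submodule K E), P < U i →
      (∃ u : ι → E, (∀ i, u i ∈ U i) ∧ LinearIndependent K u) ∨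
      ∃ J : Finset ι, i ∉ J ∧ Module.finrank K ↥(P ⊔ J.sup U) ≤ J.card := by
    intro i P hP
    by_cases hc : ∀ J : Finset ι, J.card ≤ Module.finrank K ↥(J.sup (Function.update U i P))
    · left
      obtain ⟨u, hu, hli⟩ := ih _ (Finset.sum_lt_sum (fun j _ => by
          by_cases hj : j = i
          · subst hj; rw [Function.update_self]; exact Submodule.finrank_mono hP.le
          · rw [Function.update_of_ne hj])
          ⟨i, Finset.mem_univ i, by
            rw [Function.update_self]; exact Submodule.finrank_lt_finrank_of_lt hP⟩)
          (Function.update U i P) hc rfl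
      refine ⟨u, fun j => ?_, hli⟩
      by_cases hj : j = i
      · subst hj; exact hP.le (by simpa using hu j)
      · simpa [Function.update_of_ne hj] using hu j
    · right
      push Not at hc
      obtain ⟨J, hJ⟩ := hc
      have hoff : ∀ J' : Finset ι, i ∉ J' → J'.sup (Function.update U i P) = J'.sup U :=
        fun J' hi => Finset.sup_congr rfl fun j hj =>
          Function.update_of_ne (fun h => hi (by rwa [← h])) _ _
      by_cases hi : i ∈ J
      · refine ⟨J.erase i, Finset.notMem_erase i J, ?_⟩
        rw [← Finset.insert_erase hi, Finset.sup_insert, hoff _ (Finset.notMem_erase i J),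
          Function.update_self, Finset.card_insert_of_notMem (Finset.notMem_erase i J)] at hJ
        omega
      · rw [hoff J hi] at hJ
        exact absurd (hU J) (by omega)
  by_cases hbig : ∃ i, 1 < Module.finrank K (U i)
  · obtain ⟨i, hi⟩ := hbig
    -- `U i` is the sum of two proper subspaces: a line and a complement of it.
    obtain ⟨P, Q, hP, hQ, hPQ⟩ : ∃ P Q : Submodule K E, P < U i ∧ Q < U i ∧ P ⊔ Q = U i := by
      have hne : U i ≠ ⊥ := by
        intro h0; rw [h0, finrank_bot] at hi; omega
      obtain ⟨x, hx, hx0⟩ := Submodule.exists_mem_ne_zero_of_ne_bot hne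
      have hxle : K ∙ x ≤ U i := (Submodule.span_singleton_le_iff_mem _ _).2 hx
      obtain ⟨C, hC⟩ := Submodule.exists_isCompl (K ∙ x)
      refine ⟨K ∙ x, C ⊓ U i, lt_of_le_of_ne hxle ?_, lt_of_le_of_ne inf_le_right ?_, ?_⟩
      · intro h0
        rw [← h0, finrank_span_singleton hx0] at hi
        omega
      · intro h0
        have hxC : x ∈ C := (inf_eq_right.1 h0) hx
        exact hx0 (Submodule.disjoint_def.1 hC.disjoint x (Submodule.mem_span_singleton_self x) hxC)
      · rw [← sup_inf_assoc_of_le C hxle, hC.sup_eq_top, top_inf_eq]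
    rcases key i P hP with h | ⟨J₁, hi₁, hJ₁⟩
    · exact h
    rcases key i Q hQ with h | ⟨J₂, hi₂, hJ₂⟩
    · exact h
    -- Submodularity of the dimension contradicts the two failures.
    exfalso
    have hmod := Submodule.finrank_sup_add_finrank_inf_eq (P ⊔ J₁.sup U) (Q ⊔ J₂.sup U)
    have hsup : (P ⊔ J₁.sup U) ⊔ (Q ⊔ J₂.sup U) = (insert i (J₁ ∪ J₂)).sup U := by
      rw [Finset.sup_insert, Finset.sup_union, ← hPQ, sup_sup_sup_comm]
    have hinf : (J₁ ∩ J₂).sup U ≤ (P ⊔ J₁.sup U) ⊓ (Q ⊔ J₂.sup U) :=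
      le_inf (le_sup_of_le_right (Finset.sup_mono Finset.inter_subset_left))
        (le_sup_of_le_right (Finset.sup_mono Finset.inter_subset_right))
    have h1 := Submodule.finrank_mono hinf
    have h2 := hU (J₁ ∩ J₂)
    have h3 := hU (insert i (J₁ ∪ J₂))
    rw [Finset.card_insert_of_notMem (by simp [hi₁, hi₂])] at h3
    rw [hsup] at hmod
    have h4 := Finset.card_union_add_card_inter J₁ J₂
    omega
  · push Not at hbig
    have hone : ∀ i, ∃ x, U i = K ∙ x := by
      intro i
      obtain ⟨v, hv⟩ := finrank_le_one_iff.1 (hbig i)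
      refine ⟨v, le_antisymm (fun y hy => ?_)
        ((Submodule.span_singleton_le_iff_mem _ _).2 v.2)⟩
      obtain ⟨c, hc⟩ := hv ⟨y, hy⟩
      exact Submodule.mem_span_singleton.2 ⟨c, by simpa using congrArg Subtype.val hc⟩
    choose u hu using hone
    refine ⟨u, fun i => hu i ▸ Submodule.mem_span_singleton_self _, ?_⟩
    rw [linearIndependent_iff_card_le_finrank_span]
    have h1 := hU Finset.univ
    rwa [Finset.sup_univ_eq_iSup, iSup_congr hu, ← Submodule.span_range_eq_iSup] at h1

/-- The primal form of Rado's theorem: a space of dimension `n` has a basis `b` such that the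
`i`-th coordinate vanishes on `W i`, provided any `k` of the `W i` intersect in codimension at
least `k`. -/
theorem exists_basis_of_finrank_inf {K E : Type*} [Field K] [AddCommGroup E] [Module K E]
    [FiniteDimensional K E] {n : ℕ} (hn : Module.finrank K E = n) (W : Fin n → Submodule K E)
    (hW : ∀ J : Finset (Fin n), J.card + Module.finrank K ↥(J.inf W) ≤ n) :
    ∃ b : Module.Basis (Fin n) K E, ∀ i, ∀ w ∈ W i, b.repr w i = 0 := by
  obtain ⟨φ, hφ, hli⟩ := exists_linearIndependent_of_rado (fun i => (W i).dualAnnihilator) (by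
    intro J
    have h1 : J.sup (fun i => (W i).dualAnnihilator) = (J.inf W).dualAnnihilator := by
      induction J using Finset.induction_on with
      | empty => simp
      | insert j J _ ihJ => rw [Finset.sup_insert, Finset.inf_insert, ihJ,
          Subspace.dualAnnihilator_inf_eq]
    have h2 := Subspace.finrank_add_finrank_dualAnnihilator_eq (J.inf W)
    have h3 := hW J
    rw [h1]
    omega)
  have hspan : Submodule.span K (Set.range φ) = ⊤ :=
    hli.span_eq_top_of_card_eq_finrank' (by simp [Subspace.dual_finrank_eq, hn])
  have hinj : Function.Injective (LinearMap.pi φ) := by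
    rw [← LinearMap.ker_eq_bot, LinearMap.ker_eq_bot']
    intro x hx
    rw [← Module.forall_dual_apply_eq_zero_iff K]
    intro f
    have hf : f ∈ Submodule.span K (Set.range φ) := hspan ▸ Submodule.mem_top
    induction hf using Submodule.span_induction with
    | mem f hf => obtain ⟨i, rfl⟩ := hf; exact congrFun hx i
    | zero => rfl
    | add f g _ _ hf hg => simp [hf, hg]
    | smul c f _ hf => simp [hf]
  refine ⟨Module.Basis.ofEquivFun
    ((LinearMap.pi φ).linearEquivOfInjective hinj (by simp [hn])), fun i w hw => ?_⟩
  have := (Submodule.mem_dualAnnihilator _).1 (hφ i) w hw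
  simpa using this

theorem finrank_map_of_injective {K E F : Type*} [Field K] [AddCommGroup E] [Module K E]
    [AddCommGroup F] [Module K F] {f : E →ₗ[K] F} (hf : Function.Injective f)
    (p : Submodule K E) : Module.finrank K ↥(p.map f) = Module.finrank K p :=
  (Submodule.equivMapOfInjective f hf p).finrank_eq.symm

section
variable {K L : Type*} [Field K] [Field L] [Algebra K L]

/-- The outcome of iterating Dyson's transform `(S, V) ↦ (S + eV, V ∩ e⁻¹S)`, `e ∈ S`: a step with
`eV ≰ S` strictly lowers `dim V`, so the process stops, and it can only stop when `S V ≤ S`. -/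
theorem exists_dyson_stable (A S V : Submodule K L) [FiniteDimensional K A]
    [FiniteDimensional K V] (hV : (1 : L) ∈ V) (hSV : ∀ s ∈ S, ∀ v ∈ V, s * v ∈ A) :
    ∃ S' V' : Submodule K L, S' ≤ A ∧ V' ≤ V ∧ (∀ s ∈ S', ∀ v ∈ V', s * v ∈ S') ∧
      Module.finrank K S' + Module.finrank K V' = Module.finrank K S + Module.finrank K V := by
  induction hm : Module.finrank K V using Nat.strong_induction_on generalizing S V with
  | _ m ih =>
  subst hm
  have hSA : S ≤ A := fun s hs => by simpa using hSV s hs 1 hV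
  by_cases hst : ∀ s ∈ S, ∀ v ∈ V, s * v ∈ S
  · exact ⟨S, V, hSA, le_rfl, hst, rfl⟩
  push Not at hst
  obtain ⟨e, he, v₀, hv₀, hev⟩ := hst
  have he0 : e ≠ 0 := by rintro rfl; simp at hev
  have : FiniteDimensional K S := Submodule.finiteDimensional_of_le hSA
  have hinj : Function.Injective (LinearMap.mulLeft K e) :=
    fun x y hxy => mul_left_cancel₀ he0 hxy
  set V₁ : Submodule K L := V ⊓ S.comap (LinearMap.mulLeft K e) with hV₁
  set S₁ : Submodule K L := S ⊔ V.map (LinearMap.mulLeft K e) with hS₁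
  have hV₁V : V₁ < V := lt_of_le_of_ne inf_le_left fun h => by
    rw [← h] at hv₀; exact hev hv₀.2
  have : FiniteDimensional K V₁ := Submodule.finiteDimensional_of_le hV₁V.le
  have hdim : Module.finrank K S₁ + Module.finrank K V₁ =
      Module.finrank K S + Module.finrank K V := by
    have h1 := Submodule.finrank_sup_add_finrank_inf_eq S (V.map (LinearMap.mulLeft K e))
    have h2 : S ⊓ V.map (LinearMap.mulLeft K e) = V₁.map (LinearMap.mulLeft K e) := by
      rw [hV₁, inf_comm, Submodule.map_inf_eq_map_inf_comap]
    rwa [h2, finrank_map_of_injective hinj,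
      finrank_map_of_injective hinj] at h1
  obtain ⟨S', V', hS', hV', hst, hd⟩ := ih _ (Submodule.finrank_lt_finrank_of_lt hV₁V) S₁ V₁
    ⟨hV, by simpa using he⟩ (by
      intro s hs v hv
      obtain ⟨t, ht, _, ⟨w, hw, rfl⟩, rfl⟩ := Submodule.mem_sup.1 hs
      rw [add_mul]
      refine A.add_mem (hSV t ht v hv.1) ?_
      -- `(e w) v = (e v) w` with `e v ∈ S` and `w ∈ V`.
      have := hSV _ hv.2 w hw
      simp only [LinearMap.mulLeft_apply] at this ⊢
      rwa [mul_right_comm]) rfl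
  exact ⟨S', V', hS', hV'.trans hV₁V.le, hst, by omega⟩

/-- The multipliers of a finite-dimensional subspace `S` form a field: if they include `R`, they
include all of `K(R)`. -/
theorem adjoin_mul_mem (S R : Submodule K L) [FiniteDimensional K S]
    (hRS : ∀ s ∈ S, ∀ r ∈ R, s * r ∈ S) {x : L}
    (hx : x ∈ IntermediateField.adjoin K (R : Set L)) : ∀ s ∈ S, s * x ∈ S := by
  induction hx using IntermediateField.adjoin_induction with
  | mem x hx => exact fun s hs => hRS s hs x hx
  | algebraMap c =>
    intro s hs
    rw [mul_comm, ← Algebra.smul_def]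
    exact S.smul_mem c hs
  | add x y _ _ hx hy => exact fun s hs => by rw [mul_add]; exact S.add_mem (hx s hs) (hy s hs)
  | mul x y _ _ hx hy => exact fun s hs => by rw [← mul_assoc]; exact hy _ (hx s hs)
  | inv x _ hx =>
    intro s hs
    by_cases hx0 : x = 0
    · simp [hx0]
    -- Multiplication by `x` is injective on `S`, so it is onto.
    have hinj : Function.Injective (LinearMap.mulRight K x) :=
      fun y z hyz => mul_right_cancel₀ hx0 hyz
    have hle : S.map (LinearMap.mulRight K x) ≤ S := by
      rintro _ ⟨t, ht, rfl⟩
      exact hx t ht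
    have heq := Submodule.eq_of_le_of_finrank_eq hle (finrank_map_of_injective hinj S)
    rw [← heq] at hs
    obtain ⟨t, ht, rfl⟩ := hs
    simpa [mul_assoc, hx0] using ht

/-- The dimension count behind the transversal condition. -/
theorem finrank_add_finrank_le (A B S R : Submodule K L) [FiniteDimensional K A]
    [FiniteDimensional K B] (h1 : (1 : L) ∉ A)
    (h : ∀ R : Submodule K L, R ≤ B → R ≠ ⊥ →
      Module.finrank K R ≤
        Module.finrank K
          ↥((Subalgebra.toSubmodule (IntermediateField.adjoin K (R : Set L)).toSubalgebra) ⊓ A))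
    (hSA : S ≤ A) (hRB : R ≤ B) (hSR : ∀ s ∈ S, ∀ r ∈ R, s * r ∈ A) :
    Module.finrank K S + Module.finrank K R ≤ Module.finrank K A := by
  have : FiniteDimensional K R := Submodule.finiteDimensional_of_le hRB
  obtain ⟨S', V', hS', hV', hst, hd⟩ := exists_dyson_stable A S (R ⊔ K ∙ (1 : L))
    (Submodule.mem_sup_right (Submodule.mem_span_singleton_self 1)) (by
      intro s hs v hv
      obtain ⟨r, hr, _, hc, rfl⟩ := Submodule.mem_sup.1 hv
      obtain ⟨c, rfl⟩ := Submodule.mem_span_singleton.1 hc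
      rw [mul_add, mul_smul_comm, mul_one]
      exact A.add_mem (hSR s hs r hr) (A.smul_mem c (hSA hs)))
  have : FiniteDimensional K S' := Submodule.finiteDimensional_of_le hS'
  have : FiniteDimensional K V' := Submodule.finiteDimensional_of_le hV'
  set R' := V' ⊓ R with hR'
  have hmod := Submodule.finrank_sup_add_finrank_inf_eq V' R
  rw [← hR'] at hmod
  have hle := Submodule.finrank_mono (sup_le hV' (le_sup_left : R ≤ R ⊔ K ∙ (1 : L)))
  set H := Subalgebra.toSubmodule (IntermediateField.adjoin K (R' : Set L)).toSubalgebra with hH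
  have hR'le : Module.finrank K R' ≤ Module.finrank K ↥(H ⊓ A) := by
    by_cases hb : R' = ⊥
    · rw [hb, finrank_bot]; exact Nat.zero_le _
    · exact h R' (inf_le_right.trans hRB) hb
  have hdisj : S' ⊓ (H ⊓ A) = ⊥ := by
    rw [Submodule.eq_bot_iff]
    rintro x ⟨hxS, hxH, -⟩
    by_contra hx0
    have hxH' : x ∈ IntermediateField.adjoin K (R' : Set L) := hxH
    have := adjoin_mul_mem S' R' (fun s hs r hr => hst s hs r hr.1) (inv_mem hxH') x hxS
    rw [mul_inv_cancel₀ hx0] at this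
    exact h1 (hS' this)
  have : FiniteDimensional K ↥(H ⊓ A) := Submodule.finiteDimensional_of_le inf_le_right
  have hsum := Submodule.finrank_sup_add_finrank_inf_eq S' (H ⊓ A)
  rw [hdisj, finrank_bot] at hsum
  have hA := Submodule.finrank_mono (sup_le hS' (inf_le_right : H ⊓ A ≤ A))
  omega

end

theorem stmt_16 {K L : Type*} [Field K] [Field L] [Algebra K L]
    (hKL : ¬ Function.Surjective (algebraMap K L))
    (n : ℕ) (hn : 0 < n) (A B : Submodule K L)
    (hA : Module.finrank K A = n) (hB : Module.finrank K B = n)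
    (h1 : (1 : L) ∉ A)
    (h : ∀ R : Submodule K L, R ≤ B → R ≠ ⊥ →
      Module.finrank K R ≤
        Module.finrank K
          ↥((Subalgebra.toSubmodule (IntermediateField.adjoin K (R : Set L)).toSubalgebra) ⊓ A)) :
    MatchedTo A B n := by
  intro a ⟨hali, haspan⟩
  have : FiniteDimensional K A := FiniteDimensional.of_finrank_pos (hA ▸ hn)
  have : FiniteDimensional K B := FiniteDimensional.of_finrank_pos (hB ▸ hn)
  have haA : ∀ i, a i ∈ A := fun i => haspan ▸ Submodule.subset_span ⟨i, rfl⟩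
  obtain ⟨b, hb⟩ := exists_basis_of_finrank_inf hB
    (fun i => A.comap ((LinearMap.mulLeft K (a i)).comp B.subtype)) (by
      intro J
      set R := J.inf fun i => A.comap ((LinearMap.mulLeft K (a i)).comp B.subtype) with hR
      have hS : Module.finrank K ↥(Submodule.span K (a '' (J : Set (Fin n)))) = J.card := by
        rw [Set.image_eq_range]
        have := finrank_span_eq_card (hali.comp (Subtype.val : ↥(J : Set (Fin n)) → Fin n)
          Subtype.val_injective)
        simpa [Function.comp_def] using this
      have hfr : Module.finrank K ↥(R.map B.subtype) = Module.finrank K R :=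
        finrank_map_of_injective B.injective_subtype R
      rw [← hS, ← hfr]
      refine (finrank_add_finrank_le A B _ _ h1 h ?_ (Submodule.map_subtype_le B R) ?_).trans_eq hA
      · rw [Submodule.span_le]
        rintro _ ⟨i, -, rfl⟩
        exact haA i
      · rintro s hs _ ⟨r, hr, rfl⟩
        induction hs using Submodule.span_induction with
        | mem s hs =>
          obtain ⟨i, hi, rfl⟩ := hs
          exact (Finset.inf_le (Finset.mem_coe.1 hi) : R ≤ _) hr
        | zero => simp
        | add s t _ _ hs ht => rw [add_mul]; exact A.add_mem hs ht
        | smul c s _ hs => rw [smul_mul_assoc]; exact A.smul_mem c hs)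
  refine ⟨fun i => b i, ⟨b.linearIndependent.map' B.subtype B.ker_subtype, ?_⟩, ?_⟩
  · have h2 : Set.range (fun i => (b i : L)) = B.subtype '' Set.range b := by
      rw [← Set.range_comp]; rfl
    rw [h2, Submodule.span_image, b.span_eq, Submodule.map_top, Submodule.range_subtype]
  · rintro i x ⟨hxA, hxB⟩
    have hai : a i ≠ 0 := hali.ne_zero i
    have hx : a i * x ∈ A := by
      obtain ⟨y, hy, rfl⟩ := hxA
      simpa [hai] using hy
    have h0 := hb i ⟨x, hxB⟩ hx
    have hsum := congrArg (B.subtype) (b.sum_repr ⟨x, hxB⟩)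
    rw [map_sum] at hsum
    change _ = x at hsum
    rw [SetLike.mem_coe, ← hsum]
    refine Submodule.sum_mem _ fun j _ => ?_
    by_cases hj : j = i
    · subst hj; simp [h0]
    · rw [map_smul]
      exact Submodule.smul_mem _ _ (Submodule.subset_span ⟨j, hj, rfl⟩)
end
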